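/- If M, F, G : [0,∞) → [0,∞) are integrable functions satisfying M(√(rs)) ≥ √(F(r)·G(s)) for all r, s ≥ 0, then ∫_0^∞ M ≥ √(∫_0^∞ F · ∫_0^∞ G). -/

import Mathlib

open MeasureTheory Set

/-!
Substituting `t = exp x` turns the geometric mean of the variables into the arithmetic mean, and
the Jacobian factors `exp x` respect the hypothesis, so it suffices to prove the Prékopa–Leindler
inequality on the line. There, the superlevel sets satisfy
`a • {f > t} + b • {g > t} ⊆ {m > t}`, and the one-dimensional Brunn–Minkowski inequality bounds
`a |{f > t}| + b |{g > t}|` by `|{m > t}|` as long as both sets on the left are nonempty. Rescaling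
`g` to have the same supremum as `f` makes these sets nonempty for the same `t`; integrating over
`t` then bounds `a ∫ f + b ∫ g` by `∫ m`, and the weighted AM–GM inequality concludes. Approximating
`f` and `g` from below by simple functions makes the suprema finite.
-/

open scoped ENNReal NNReal Pointwise

section BrunnMinkowski

variable {A B : Set ℝ}

lemma volume_add_volume_le_volume_add_of_isCompact (hA : IsCompact A) (hB : IsCompact B)
    (hA₀ : A.Nonempty) (hB₀ : B.Nonempty) : volume A + volume B ≤ volume (A + B) := by
  obtain ⟨a, ha, ha_max⟩ := hA.exists_isGreatest hA₀
  obtain ⟨b, hb, hb_min⟩ := hB.exists_isLeast hB₀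
  have h_inter : (A + {b}) ∩ ({a} + B) ⊆ {a + b} := by
    rintro _ ⟨⟨x, hx, _, hb', rfl⟩, ⟨_, ha', y, hy, hxy⟩⟩
    have hxa : x ≤ a := ha_max hx
    have hby : b ≤ y := hb_min hy
    simp only [mem_singleton_iff] at ha' hb' hxy ⊢
    linarith
  have h_disj : AEDisjoint volume (A + {b}) ({a} + B) :=
    measure_mono_null h_inter Real.volume_singleton
  calc volume A + volume B
      = volume (A + {b}) + volume ({a} + B) := by simp
    _ = volume (A + {b} ∪ ({a} + B)) :=
        (measure_union₀ (isCompact_singleton.add hB).measurableSet.nullMeasurableSet h_disj).symm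
    _ ≤ volume (A + B) := measure_mono <| union_subset
        (add_subset_add_left (singleton_subset_iff.2 hb))
        (add_subset_add_right (singleton_subset_iff.2 ha))

theorem volume_add_volume_le_volume_add (hA : MeasurableSet A) (hB : MeasurableSet B)
    (hA₀ : A.Nonempty) (hB₀ : B.Nonempty) : volume A + volume B ≤ volume (A + B) := by
  obtain ⟨a, ha⟩ := hA₀
  obtain ⟨b, hb⟩ := hB₀
  simp only [hA.measure_eq_iSup_isCompact, hB.measure_eq_iSup_isCompact, iSup_and']
  refine ENNReal.biSup_add_biSup_le' ⟨∅, by simp⟩ ⟨∅, by simp⟩ ?_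
  rintro K ⟨hKA, hK⟩ L ⟨hLB, hL⟩
  calc volume K + volume L
      ≤ volume (insert a K) + volume (insert b L) := by gcongr <;> exact subset_insert _ _
    _ ≤ volume (insert a K + insert b L) :=
        volume_add_volume_le_volume_add_of_isCompact (hK.insert a) (hL.insert b)
          (insert_nonempty _ _) (insert_nonempty _ _)
    _ ≤ volume (A + B) := by
        gcongr
        exacts [insert_subset ha hKA, insert_subset hb hLB]

end BrunnMinkowski

lemma ennreal_geom_mean_le_arith_mean2_weighted {a b : ℝ} (ha : 0 < a) (hb : 0 < b)
    (hab : a + b = 1) (x y : ℝ≥0∞) :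
    x ^ a * y ^ b ≤ ENNReal.ofReal a * x + ENNReal.ofReal b * y := by
  have h := ENNReal.young_inequality (x ^ a) (y ^ b) (Real.HolderConjugate.inv_inv ha hb hab)
  rwa [ENNReal.rpow_rpow_inv ha.ne', ENNReal.rpow_rpow_inv hb.ne', ENNReal.ofReal_inv_of_pos ha,
    ENNReal.ofReal_inv_of_pos hb, div_eq_mul_inv, div_eq_mul_inv, inv_inv, inv_inv,
    mul_comm x, mul_comm y] at h

section LIntegralCoe

variable {α : Type*} [MeasurableSpace α] {μ : Measure α}

lemma lintegral_coe_const_mul (c : ℝ≥0) (f : α → ℝ≥0) :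
    ∫⁻ x, (c * f x : ℝ≥0) ∂μ = c * ∫⁻ x, f x ∂μ := by
  simp_rw [ENNReal.coe_mul]
  exact lintegral_const_mul' _ _ ENNReal.coe_ne_top

lemma lintegral_coe_eq_lintegral_meas_lt {f : α → ℝ≥0} (hf : AEMeasurable f μ) :
    ∫⁻ x, f x ∂μ = ∫⁻ t in Ioi (0 : ℝ), μ {x | t < f x} := by
  simpa using lintegral_eq_lintegral_meas_lt μ (.of_forall fun x ↦ (f x).coe_nonneg)
    hf.coe_nnreal_real

end LIntegralCoe

section PrekopaLeindler

variable {a b : ℝ}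

lemma smul_superlevel_add_smul_superlevel_subset {E : Type*} [AddCommGroup E] [Module ℝ E]
    {f g m : E → ℝ≥0} (ha : 0 < a) (hb : 0 < b) (hab : a + b = 1)
    (h : ∀ x y, f x ^ a * g y ^ b ≤ m (a • x + b • y)) {t : ℝ} (ht : 0 ≤ t) :
    a • {x | t < f x} + b • {y | t < g y} ⊆ {z | t < m z} := by
  rintro _ ⟨_, ⟨x, hx, rfl⟩, _, ⟨y, hy, rfl⟩, rfl⟩
  lift t to ℝ≥0 using ht
  simp only [NNReal.coe_lt_coe, mem_ofPred_eq] at hx hy ⊢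
  calc t = t ^ a * t ^ b := by rw [← NNReal.rpow_add_of_nonneg _ ha.le hb.le, hab, NNReal.rpow_one]
    _ < f x ^ a * g y ^ b := by gcongr
    _ ≤ m (a • x + b • y) := h x y

variable {f g m : ℝ → ℝ≥0}

lemma weighted_volume_superlevel_add_le (ha : 0 < a) (hb : 0 < b) (hab : a + b = 1)
    (hf : Measurable f) (hg : Measurable g)
    (h : ∀ x y, f x ^ a * g y ^ b ≤ m (a * x + b * y)) {t : ℝ} (ht : 0 ≤ t)
    (hft : {x | t < f x}.Nonempty) (hgt : {y | t < g y}.Nonempty) :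
    ENNReal.ofReal a * volume {x | t < f x} + ENNReal.ofReal b * volume {y | t < g y} ≤
      volume {z | t < m z} := by
  have hmf : MeasurableSet {x | t < f x} := measurableSet_lt measurable_const hf.coe_nnreal_real
  have hmg : MeasurableSet {y | t < g y} := measurableSet_lt measurable_const hg.coe_nnreal_real
  calc _ = volume (a • {x | t < f x}) + volume (b • {y | t < g y}) := by
        simp [abs_of_pos, ha, hb]
    _ ≤ volume (a • {x | t < f x} + b • {y | t < g y}) :=
        volume_add_volume_le_volume_add (hmf.const_smul₀ a) (hmg.const_smul₀ b)
          hft.smul_set hgt.smul_set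
    _ ≤ volume {z | t < m z} := measure_mono <|
        smul_superlevel_add_smul_superlevel_subset ha hb hab h ht

lemma weighted_lintegral_add_le_of_isLUB_range (ha : 0 < a) (hb : 0 < b) (hab : a + b = 1)
    (hf : Measurable f) (hg : Measurable g) (hm : AEMeasurable m)
    (h : ∀ x y, f x ^ a * g y ^ b ≤ m (a * x + b * y)) {c : ℝ≥0}
    (hfc : IsLUB (range f) c) (hgc : IsLUB (range g) c) :
    ENNReal.ofReal a * (∫⁻ x, f x) + ENNReal.ofReal b * ∫⁻ y, g y ≤ ∫⁻ z, m z := by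
  have h_anti : Antitone fun t : ℝ ↦ volume {x | t < f x} :=
    fun _ _ hst ↦ measure_mono fun _ ↦ hst.trans_lt
  simp only [lintegral_coe_eq_lintegral_meas_lt hf.aemeasurable,
    lintegral_coe_eq_lintegral_meas_lt hg.aemeasurable, lintegral_coe_eq_lintegral_meas_lt hm]
  rw [← lintegral_const_mul' _ _ ENNReal.ofReal_ne_top,
    ← lintegral_const_mul' _ _ ENNReal.ofReal_ne_top,
    ← lintegral_add_left (h_anti.measurable.const_mul _)]
  refine setLIntegral_mono' measurableSet_Ioi fun t ht ↦ ?_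
  lift t to ℝ≥0 using ht.le
  obtain htc | hct := lt_or_ge t c
  · obtain ⟨_, ⟨x, rfl⟩, hx, -⟩ := hfc.exists_between htc
    obtain ⟨_, ⟨y, rfl⟩, hy, -⟩ := hgc.exists_between htc
    exact weighted_volume_superlevel_add_le ha hb hab hf hg h t.coe_nonneg
      ⟨x, NNReal.coe_lt_coe.2 hx⟩ ⟨y, NNReal.coe_lt_coe.2 hy⟩
  · have hft : ∀ x, f x ≤ t := fun x ↦ (hfc.1 (mem_range_self x)).trans hct
    have hgt : ∀ y, g y ≤ t := fun y ↦ (hgc.1 (mem_range_self y)).trans hct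
    simp [(hft _).not_gt, (hgt _).not_gt]

lemma prekopa_leindler_lintegral_of_isLUB_range (ha : 0 < a) (hb : 0 < b) (hab : a + b = 1)
    (hf : Measurable f) (hg : Measurable g) (hm : AEMeasurable m)
    (h : ∀ x y, f x ^ a * g y ^ b ≤ m (a * x + b * y)) {A B : ℝ≥0}
    (hfA : IsLUB (range f) A) (hgB : IsLUB (range g) B) :
    (∫⁻ x, f x) ^ a * (∫⁻ y, g y) ^ b ≤ ∫⁻ z, m z := by
  obtain rfl | hA := eq_or_ne A 0
  · have hf₀ : ∀ x, f x = 0 := fun x ↦ nonpos_iff_eq_zero.1 (hfA.1 (mem_range_self x))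
    simp [hf₀, ha]
  obtain rfl | hB := eq_or_ne B 0
  · have hg₀ : ∀ y, g y = 0 := fun y ↦ nonpos_iff_eq_zero.1 (hgB.1 (mem_range_self y))
    simp [hg₀, hb]
  have hg_scaled : IsLUB (range fun y ↦ A / B * g y) A := by
    simpa [← range_comp, Function.comp_def, hB] using hgB.mul_left (zero_le : 0 ≤ A / B)
  have h_scaled : ∀ x y, f x ^ a * (A / B * g y) ^ b ≤ (A / B) ^ b * m (a * x + b * y) :=
    fun x y ↦ by
      rw [NNReal.mul_rpow, mul_left_comm]
      gcongr
      exact h x y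
  have hc₀ : ((A / B) ^ b : ℝ≥0) ≠ 0 := by positivity
  rw [← ENNReal.mul_le_mul_iff_right (ENNReal.coe_ne_zero.2 hc₀) ENNReal.coe_ne_top]
  calc ((A / B) ^ b : ℝ≥0) * ((∫⁻ x, f x) ^ a * (∫⁻ y, g y) ^ b)
      = (∫⁻ x, f x) ^ a * (∫⁻ y, (A / B * g y : ℝ≥0)) ^ b := by
        rw [lintegral_coe_const_mul, ENNReal.mul_rpow_of_nonneg _ _ hb.le,
          ENNReal.coe_rpow_of_nonneg _ hb.le, mul_left_comm]
    _ ≤ ENNReal.ofReal a * (∫⁻ x, f x) + ENNReal.ofReal b * ∫⁻ y, (A / B * g y : ℝ≥0) :=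
        ennreal_geom_mean_le_arith_mean2_weighted ha hb hab _ _
    _ ≤ ∫⁻ z, ((A / B) ^ b * m z : ℝ≥0) :=
        weighted_lintegral_add_le_of_isLUB_range ha hb hab hf (hg.const_mul _) (hm.const_mul _)
          h_scaled hfA hg_scaled
    _ = ((A / B) ^ b : ℝ≥0) * ∫⁻ z, m z := lintegral_coe_const_mul _ _

theorem prekopa_leindler_lintegral (ha : 0 < a) (hb : 0 < b) (hab : a + b = 1)
    (hm : AEMeasurable m) (h : ∀ x y, f x ^ a * g y ^ b ≤ m (a * x + b * y)) :
    (∫⁻ x, f x) ^ a * (∫⁻ y, g y) ^ b ≤ ∫⁻ z, m z := by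
  refine ENNReal.mul_le_of_forall_lt fun c hc d hd ↦ ?_
  obtain ⟨φ, hφf, -, hcφ⟩ :=
    exists_lt_lintegral_simpleFunc_of_lt_lintegral ((ENNReal.rpow_inv_lt_iff ha).2 hc)
  obtain ⟨ψ, hψg, -, hdψ⟩ :=
    exists_lt_lintegral_simpleFunc_of_lt_lintegral ((ENNReal.rpow_inv_lt_iff hb).2 hd)
  obtain ⟨A, -, hA⟩ := φ.finite_range.isCompact.exists_isLUB (range_nonempty φ)
  obtain ⟨B, -, hB⟩ := ψ.finite_range.isCompact.exists_isLUB (range_nonempty ψ)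
  have hφψ : ∀ x y, φ x ^ a * ψ y ^ b ≤ m (a * x + b * y) := fun x y ↦ by
    grw [hφf x, hψg y, h x y]
  calc c * d ≤ (∫⁻ x, φ x) ^ a * (∫⁻ y, ψ y) ^ b := by
        gcongr
        exacts [((ENNReal.rpow_inv_lt_iff ha).1 hcφ).le, ((ENNReal.rpow_inv_lt_iff hb).1 hdψ).le]
    _ ≤ ∫⁻ z, m z :=
        prekopa_leindler_lintegral_of_isLUB_range ha hb hab φ.measurable ψ.measurable hm hφψ hA hB

theorem prekopa_leindler_integral (ha : 0 < a) (hb : 0 < b) (hab : a + b = 1) {f g m : ℝ → ℝ}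
    (hf₀ : 0 ≤ f) (hg₀ : 0 ≤ g) (hf : Integrable f) (hg : Integrable g) (hm : Integrable m)
    (h : ∀ x y, f x ^ a * g y ^ b ≤ m (a * x + b * y)) :
    (∫ x, f x) ^ a * (∫ y, g y) ^ b ≤ ∫ z, m z := by
  have hm₀ : 0 ≤ m := fun z ↦ by
    have hz := h z z
    rw [← add_mul, hab, one_mul] at hz
    exact (mul_nonneg (Real.rpow_nonneg (hf₀ z) a) (Real.rpow_nonneg (hg₀ z) b)).trans hz
  have hI : 0 ≤ ∫ x, f x := integral_nonneg hf₀
  have hJ : 0 ≤ ∫ x, g x := integral_nonneg hg₀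
  have h_nn : ∀ x y, (f x).toNNReal ^ a * (g y).toNNReal ^ b ≤ (m (a * x + b * y)).toNNReal :=
    fun x y ↦ by
      rw [← Real.toNNReal_rpow_of_nonneg (hf₀ x), ← Real.toNNReal_rpow_of_nonneg (hg₀ y),
        ← Real.toNNReal_mul (Real.rpow_nonneg (hf₀ x) a)]
      exact Real.toNNReal_mono (h x y)
  rw [← ENNReal.ofReal_le_ofReal_iff (integral_nonneg hm₀),
    ENNReal.ofReal_mul (Real.rpow_nonneg hI a), ← ENNReal.ofReal_rpow_of_nonneg hI ha.le,
    ← ENNReal.ofReal_rpow_of_nonneg hJ hb.le,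
    ofReal_integral_eq_lintegral_ofReal hf (.of_forall hf₀),
    ofReal_integral_eq_lintegral_ofReal hg (.of_forall hg₀),
    ofReal_integral_eq_lintegral_ofReal hm (.of_forall hm₀)]
  exact prekopa_leindler_lintegral ha hb hab hm.aemeasurable.real_toNNReal h_nn

end PrekopaLeindler

section ExpSubstitution

variable {E : Type*} [NormedAddCommGroup E] [NormedSpace ℝ E]

lemma integrableOn_Ioi_zero_iff_integrable_exp_smul_comp_exp {F : ℝ → E} :
    IntegrableOn F (Ioi 0) ↔ Integrable fun x ↦ Real.exp x • F (Real.exp x) := by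
  simpa [Real.range_exp] using integrableOn_image_iff_integrableOn_abs_deriv_smul MeasurableSet.univ
    (fun x _ ↦ (Real.hasDerivAt_exp x).hasDerivWithinAt) Real.exp_injective.injOn F

lemma integral_Ioi_zero_eq_integral_exp_smul_comp_exp (F : ℝ → E) :
    ∫ t in Ioi 0, F t = ∫ x, Real.exp x • F (Real.exp x) := by
  simpa [Real.range_exp] using integral_image_eq_integral_abs_deriv_smul MeasurableSet.univ
    (fun x _ ↦ (Real.hasDerivAt_exp x).hasDerivWithinAt) Real.exp_injective.injOn F

end ExpSubstitution

theorem prekopa_leindler_multiplicative_general {a b : ℝ} (ha : 0 < a) (hb : 0 < b)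
    (hab : a + b = 1) {M F G : ℝ → ℝ} (hF₀ : ∀ t, 0 < t → 0 ≤ F t) (hG₀ : ∀ t, 0 < t → 0 ≤ G t)
    (hM : IntegrableOn M (Ioi 0)) (hF : IntegrableOn F (Ioi 0)) (hG : IntegrableOn G (Ioi 0))
    (h : ∀ r s, 0 < r → 0 < s → F r ^ a * G s ^ b ≤ M (r ^ a * s ^ b)) :
    (∫ t in Ioi 0, F t) ^ a * (∫ t in Ioi 0, G t) ^ b ≤ ∫ t in Ioi 0, M t := by
  simp only [integral_Ioi_zero_eq_integral_exp_smul_comp_exp]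
  rw [integrableOn_Ioi_zero_iff_integrable_exp_smul_comp_exp] at hM hF hG
  have hF' : ∀ x, 0 ≤ F (Real.exp x) := fun x ↦ hF₀ _ (Real.exp_pos x)
  have hG' : ∀ y, 0 ≤ G (Real.exp y) := fun y ↦ hG₀ _ (Real.exp_pos y)
  refine prekopa_leindler_integral ha hb hab (fun x ↦ smul_nonneg (Real.exp_nonneg x) (hF' x))
    (fun y ↦ smul_nonneg (Real.exp_nonneg y) (hG' y)) hF hG hM fun x y ↦ ?_
  have h_exp : Real.exp (a * x + b * y) = Real.exp x ^ a * Real.exp y ^ b := by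
    rw [Real.exp_add, ← Real.exp_mul, ← Real.exp_mul, mul_comm a, mul_comm b]
  simp only [smul_eq_mul]
  calc (Real.exp x * F (Real.exp x)) ^ a * (Real.exp y * G (Real.exp y)) ^ b
      = Real.exp (a * x + b * y) * (F (Real.exp x) ^ a * G (Real.exp y) ^ b) := by
        rw [Real.mul_rpow (Real.exp_nonneg x) (hF' x), Real.mul_rpow (Real.exp_nonneg y) (hG' y),
          h_exp, mul_mul_mul_comm]
    _ ≤ Real.exp (a * x + b * y) * M (Real.exp (a * x + b * y)) := by
        rw [h_exp]
        gcongr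
        exact h _ _ (Real.exp_pos x) (Real.exp_pos y)

/-- **Prékopa–Leindler inequality in multiplicative-variable (Borell–Ball) form.**
If `M, F, G : [0,∞) → [0,∞)` are integrable and `M(√(rs)) ≥ √(F(r)·G(s))` for all
`r, s ≥ 0`, then `∫₀^∞ M ≥ √(∫₀^∞ F · ∫₀^∞ G)`. -/
theorem prekopa_leindler_multiplicative (M F G : ℝ → ℝ)
    (hM0 : ∀ t, 0 ≤ t → 0 ≤ M t) (hF0 : ∀ t, 0 ≤ t → 0 ≤ F t)
    (hG0 : ∀ t, 0 ≤ t → 0 ≤ G t)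
    (hMi : IntegrableOn M (Ici 0)) (hFi : IntegrableOn F (Ici 0))
    (hGi : IntegrableOn G (Ici 0))
    (h : ∀ r s : ℝ, 0 ≤ r → 0 ≤ s →
      Real.sqrt (F r * G s) ≤ M (Real.sqrt (r * s))) :
    Real.sqrt ((∫ t in Ici (0:ℝ), F t) * ∫ t in Ici (0:ℝ), G t) ≤
      ∫ t in Ici (0:ℝ), M t := by
  rw [Real.sqrt_mul (setIntegral_nonneg measurableSet_Ici hF0)]
  simp only [integral_Ici_eq_integral_Ioi, Real.sqrt_eq_rpow] at h ⊢
  refine prekopa_leindler_multiplicative_general one_half_pos one_half_pos (add_halves 1)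
    (fun t ht ↦ hF0 t ht.le) (fun t ht ↦ hG0 t ht.le) (hMi.mono_set Ioi_subset_Ici_self)
    (hFi.mono_set Ioi_subset_Ici_self) (hGi.mono_set Ioi_subset_Ici_self) fun r s hr hs ↦ ?_
  rw [← Real.mul_rpow (hF0 r hr.le) (hG0 s hs.le), ← Real.mul_rpow hr.le hs.le]
  exact h r s hr.le hs.le
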